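/- Let ρ ∝ exp(−V) on ℝ^d with V convex and L-smooth, let q ≥ 2 be an integer, and let ξ₁, …, ξ_q be i.i.d. N(0, tI) with Lqt < 1. Then ∫ E[exp(−∑_{i=1}^q V(x+ξ_i) + q V(x))] ρ(dx) ≤ (1 − Lqt)^{−d/2}. -/

import Mathlib

open MeasureTheory

noncomputable section

/-- Density of the centered Gaussian N(0, tI) on ℝ^d. -/
def gaussPdf (d : ℕ) (t : ℝ) (x : EuclideanSpace ℝ (Fin d)) : ℝ :=
  (2 * Real.pi * t) ^ (-(d:ℝ)/2) * Real.exp (-‖x‖^2 / (2*t))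

/-- The centered Gaussian measure N(0, tI) on ℝ^d. -/
def gaussMeasure (d : ℕ) (t : ℝ) : Measure (EuclideanSpace ℝ (Fin d)) :=
  volume.withDensity fun x => ENNReal.ofReal (gaussPdf d t x)

/-!
Convexity at `x` bounds `∑ i, V (x + ξ i)` below by `q V(x) + ⟪∇V x, S⟫`, where `S = ∑ i, ξ i`, and
smoothness bounds `V (x + S)` above by `V x + ⟪∇V x, S⟫ + (L/2) ‖S‖²`. The gradient cancels:
`-∑ i, V (x + ξ i) + q V(x) ≤ V x - V (x + S) + (L/2) ‖S‖²`. Against `ρ ∝ exp (-V)`, the factor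
`exp (V x - V (x + S))` replaces `ρ` by its translate, which has the same mass, so that only
`𝔼 exp ((L/2) ‖S‖²)` remains. Averaging `exp ⟪√L S, g⟫` over a standard Gaussian vector `g` turns
this expectation into moment generating functions of `S`, and these are subgaussian with variance
proxy `q t`.
-/

open scoped RealInnerProductSpace

section Smooth

variable {E : Type*} [NormedAddCommGroup E] [InnerProductSpace ℝ E] [CompleteSpace E] {f : E → ℝ}
  {x y g : E}

lemma hasDerivAt_comp_lineMap_of_hasGradientAt {s : ℝ}
    (hf : HasGradientAt f g (AffineMap.lineMap x y s)) :
    HasDerivAt (fun r : ℝ ↦ f (AffineMap.lineMap x y r)) ⟪g, y - x⟫ s := by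
  simpa [Function.comp_def] using
    hf.hasFDerivAt.comp_hasDerivAt s AffineMap.hasDerivAt_lineMap

lemma add_inner_sub_le_of_convexOn {s : Set E} (hf : ConvexOn ℝ s f) (hx : x ∈ s) (hy : y ∈ s)
    (hg : HasGradientAt f g x) : f x + ⟪g, y - x⟫ ≤ f y := by
  have hderiv : HasDerivAt (fun r : ℝ ↦ f (AffineMap.lineMap x y r)) ⟪g, y - x⟫ 0 :=
    hasDerivAt_comp_lineMap_of_hasGradientAt (by simpa using hg)
  have hslope := (hf.comp_affineMap (AffineMap.lineMap x y)).le_slope_of_hasDerivAt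
    (x := 0) (y := 1) (by simpa using hx) (by simpa using hy) one_pos hderiv
  simp only [slope_def_field, Function.comp_apply, AffineMap.lineMap_apply_zero,
    AffineMap.lineMap_apply_one, sub_zero, div_one] at hslope
  linarith

lemma le_add_inner_gradient_add_sq_of_lipschitz_gradient {L : ℝ} (hf : Differentiable ℝ f)
    (hL : ∀ x y, ‖gradient f x - gradient f y‖ ≤ L * ‖x - y‖) (x y : E) :
    f y ≤ f x + ⟪gradient f x, y - x⟫ + L * ‖y - x‖ ^ 2 / 2 := by
  set c := ⟪gradient f x, y - x⟫
  let B : ℝ → ℝ := fun s ↦ f x + s * c + s ^ 2 * (L * ‖y - x‖ ^ 2 / 2)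
  have hf' (s : ℝ) : HasDerivAt (fun r : ℝ ↦ f (AffineMap.lineMap x y r))
      ⟪gradient f (AffineMap.lineMap x y s), y - x⟫ s :=
    hasDerivAt_comp_lineMap_of_hasGradientAt (hf _).hasGradientAt
  have hB' (s : ℝ) : HasDerivAt B (c + s * (L * ‖y - x‖ ^ 2)) s := by
    refine ((((hasDerivAt_id s).mul_const c).const_add (f x)).add
      ((hasDerivAt_pow 2 s).mul_const (L * ‖y - x‖ ^ 2 / 2))).congr_deriv ?_
    norm_num
    ring
  have hbound (s : ℝ) (hs : 0 ≤ s) :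
      ⟪gradient f (AffineMap.lineMap x y s), y - x⟫ ≤ c + s * (L * ‖y - x‖ ^ 2) := by
    have hgrad : ‖gradient f (AffineMap.lineMap x y s) - gradient f x‖ ≤ L * (s * ‖y - x‖) := by
      refine (hL _ _).trans_eq ?_
      rw [← dist_eq_norm, dist_lineMap_left, Real.norm_of_nonneg hs, dist_comm, dist_eq_norm]
    calc ⟪gradient f (AffineMap.lineMap x y s), y - x⟫
        = c + ⟪gradient f (AffineMap.lineMap x y s) - gradient f x, y - x⟫ := by
          rw [inner_sub_left]; ring
      _ ≤ c + L * (s * ‖y - x‖) * ‖y - x‖ := by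
          grw [real_inner_le_norm, hgrad]
      _ = c + s * (L * ‖y - x‖ ^ 2) := by ring
  have hle := image_le_of_deriv_right_le_deriv_boundary (a := 0) (b := 1) (B := B)
    (fun s _ ↦ (hf' s).continuousAt.continuousWithinAt) (fun s _ ↦ (hf' s).hasDerivWithinAt)
    (by simp [B]) (fun s _ ↦ (hB' s).continuousAt.continuousWithinAt)
    (fun s _ ↦ (hB' s).hasDerivWithinAt) (fun s hs ↦ hbound s hs.1)
    (Set.right_mem_Icc.2 zero_le_one)
  simpa [B] using hle

lemma neg_sum_add_card_mul_le_of_convexOn_of_lipschitz_gradient {ι : Type*} [Fintype ι] {L : ℝ}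
    (hf : Differentiable ℝ f) (hconv : ConvexOn ℝ Set.univ f)
    (hL : ∀ x y, ‖gradient f x - gradient f y‖ ≤ L * ‖x - y‖) (x : E) (ξ : ι → E) :
    -(∑ i, f (x + ξ i)) + Fintype.card ι * f x
      ≤ f x - f (x + ∑ i, ξ i) + L * ‖∑ i, ξ i‖ ^ 2 / 2 := by
  have hupper := le_add_inner_gradient_add_sq_of_lipschitz_gradient hf hL x (x + ∑ i, ξ i)
  have hlower : ∑ i, (f x + ⟪gradient f x, ξ i⟫) ≤ ∑ i, f (x + ξ i) :=
    Finset.sum_le_sum fun i _ ↦ by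
      simpa using add_inner_sub_le_of_convexOn hconv (Set.mem_univ x) (Set.mem_univ (x + ξ i))
        (hf x).hasGradientAt
  rw [Finset.sum_add_distrib, ← inner_sum, Finset.sum_const, Finset.card_univ,
    nsmul_eq_mul] at hlower
  rw [add_sub_cancel_left] at hupper
  linarith

end Smooth

section Integral

variable {α β : Type*} [MeasurableSpace α] [MeasurableSpace β]

lemma lintegral_ofReal_fintype_prod_eq_prod {ι : Type*} [Fintype ι] {X : ι → Type*}
    [∀ i, MeasurableSpace (X i)] {μ : ∀ i, Measure (X i)} [∀ i, SigmaFinite (μ i)]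
    {f : ∀ i, X i → ℝ} (hf : ∀ i, Integrable (f i) (μ i)) (hf0 : ∀ i x, 0 ≤ f i x) :
    ∫⁻ x, ENNReal.ofReal (∏ i, f i (x i)) ∂(Measure.pi μ)
      = ∏ i, ∫⁻ x, ENNReal.ofReal (f i x) ∂(μ i) := by
  rw [← ofReal_integral_eq_lintegral_ofReal (Integrable.fintype_prod_dep hf)
      (ae_of_all _ fun x ↦ Finset.prod_nonneg fun i _ ↦ hf0 i (x i)),
    integral_fintype_prod_eq_prod,
    ENNReal.ofReal_prod_of_nonneg fun i _ ↦ integral_nonneg (hf0 i)]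
  exact Finset.prod_congr rfl fun i _ ↦
    ofReal_integral_eq_lintegral_ofReal (hf i) (ae_of_all _ (hf0 i))

lemma lintegral_ofReal_div_integral_le_one {μ : Measure α} {f : α → ℝ} (hf : ∀ x, 0 ≤ f x) :
    ∫⁻ x, ENNReal.ofReal (f x / ∫ y, f y ∂μ) ∂μ ≤ 1 := by
  by_cases hint : Integrable f μ
  · rw [← ofReal_integral_eq_lintegral_ofReal (hint.div_const _)
      (ae_of_all _ fun x ↦ div_nonneg (hf x) (integral_nonneg hf)), integral_div]
    exact ENNReal.ofReal_le_one.2 (div_self_le_one _)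
  · simp [integral_undef hint]

lemma integral_integral_le_of_lintegral_lintegral_le {μ : Measure α} {ν : Measure β}
    {f : α → β → ℝ} {B : ℝ} (hf : ∀ x y, 0 ≤ f x y) (hB : 0 ≤ B)
    (h : ∫⁻ x, ∫⁻ y, ENNReal.ofReal (f x y) ∂ν ∂μ ≤ ENNReal.ofReal B) :
    ∫ x, ∫ y, f x y ∂ν ∂μ ≤ B := by
  refine (Real.le_norm_self _).trans ((ENNReal.ofReal_le_ofReal_iff hB).1 ?_)
  calc ENNReal.ofReal ‖∫ x, ∫ y, f x y ∂ν ∂μ‖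
      = ‖∫ x, ∫ y, f x y ∂ν ∂μ‖ₑ := ofReal_norm _
    _ ≤ ∫⁻ x, ‖∫ y, f x y ∂ν‖ₑ ∂μ := enorm_integral_le_lintegral_enorm _
    _ ≤ ∫⁻ x, ∫⁻ y, ‖f x y‖ₑ ∂ν ∂μ := lintegral_mono fun x ↦ enorm_integral_le_lintegral_enorm _
    _ = ∫⁻ x, ∫⁻ y, ENNReal.ofReal (f x y) ∂ν ∂μ := by
      simp only [Real.enorm_of_nonneg (hf _ _)]
    _ ≤ ENNReal.ofReal B := h

end Integral

lemma lintegral_lintegral_exp_sum_le_mul {E : Type*} [NormedAddCommGroup E]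
    [InnerProductSpace ℝ E] [CompleteSpace E] [MeasurableSpace E] [BorelSpace E]
    [SecondCountableTopology E] {ι : Type*} [Fintype ι] {L Z : ℝ} (hZ : 0 ≤ Z) {V : E → ℝ}
    (hV : Differentiable ℝ V) (hconv : ConvexOn ℝ Set.univ V)
    (hsmooth : ∀ x y, ‖gradient V x - gradient V y‖ ≤ L * ‖x - y‖) (μ : Measure E) [SFinite μ]
    [μ.IsAddRightInvariant] (P : Measure (ι → E)) [SFinite P] :
    ∫⁻ x, ∫⁻ ξ, ENNReal.ofReal (Real.exp (-(∑ i, V (x + ξ i)) + Fintype.card ι * V x)) ∂P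
        ∂(μ.withDensity fun x ↦ ENNReal.ofReal (Real.exp (-(V x)) / Z))
      ≤ (∫⁻ x, ENNReal.ofReal (Real.exp (-(V x)) / Z) ∂μ) *
        ∫⁻ ξ, ENNReal.ofReal (Real.exp (L * ‖∑ i, ξ i‖ ^ 2 / 2)) ∂P := by
  have hVc : Continuous V := hV.continuous
  let p : E → ENNReal := fun x ↦ ENNReal.ofReal (Real.exp (-(V x)) / Z)
  let G : (ι → E) → ENNReal := fun ξ ↦ ENNReal.ofReal (Real.exp (L * ‖∑ i, ξ i‖ ^ 2 / 2))
  have hp : Measurable p := by fun_prop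
  have hG : Measurable G := by fun_prop
  have hpoint (x : E) (ξ : ι → E) :
      p x * ENNReal.ofReal (Real.exp (-(∑ i, V (x + ξ i)) + Fintype.card ι * V x))
        ≤ p (x + ∑ i, ξ i) * G ξ := by
    simp only [p, G]
    rw [← ENNReal.ofReal_mul (by positivity), ← ENNReal.ofReal_mul (by positivity),
      div_mul_eq_mul_div, div_mul_eq_mul_div, ← Real.exp_add, ← Real.exp_add]
    have hexponent :=
      neg_sum_add_card_mul_le_of_convexOn_of_lipschitz_gradient hV hconv hsmooth x ξ
    exact ENNReal.ofReal_le_ofReal (div_le_div_of_nonneg_right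
      (Real.exp_le_exp.2 (by linarith)) hZ)
  calc _ ≤ ∫⁻ x, p x * ∫⁻ ξ, ENNReal.ofReal
          (Real.exp (-(∑ i, V (x + ξ i)) + Fintype.card ι * V x)) ∂P ∂μ :=
        lintegral_withDensity_le_lintegral_mul μ hp _
    _ ≤ ∫⁻ x, ∫⁻ ξ, p (x + ∑ i, ξ i) * G ξ ∂P ∂μ := by
        gcongr with x
        rw [← lintegral_const_mul' _ _ ENNReal.ofReal_ne_top]
        exact lintegral_mono (hpoint x)
    _ = ∫⁻ ξ, ∫⁻ x, p (x + ∑ i, ξ i) * G ξ ∂μ ∂P :=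
        lintegral_lintegral_swap (by unfold Function.uncurry; fun_prop)
    _ = ∫⁻ ξ, (∫⁻ x, p x ∂μ) * G ξ ∂P := by
        refine lintegral_congr fun ξ ↦ ?_
        rw [lintegral_mul_const' _ _ ENNReal.ofReal_ne_top, lintegral_add_right_eq_self p]
    _ = (∫⁻ x, p x ∂μ) * ∫⁻ ξ, G ξ ∂P := lintegral_const_mul _ hG

section Gaussian

variable {E : Type*} [NormedAddCommGroup E] [InnerProductSpace ℝ E] [FiniteDimensional ℝ E]
  [MeasurableSpace E] [BorelSpace E]

lemma lintegral_exp_neg_mul_sq_norm {b : ℝ} (hb : 0 < b) :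
    ∫⁻ x : E, ENNReal.ofReal (Real.exp (-b * ‖x‖ ^ 2))
      = ENNReal.ofReal ((Real.pi / b) ^ (Module.finrank ℝ E / 2 : ℝ)) := by
  have h := GaussianFourier.integral_rexp_neg_mul_sq_norm (V := E) hb
  have hint : Integrable fun x : E ↦ Real.exp (-b * ‖x‖ ^ 2) :=
    not_imp_comm.1 integral_undef (h ▸ by positivity)
  rw [← h, ofReal_integral_eq_lintegral_ofReal hint (ae_of_all _ fun x ↦ (Real.exp_pos _).le)]

lemma lintegral_exp_inner_sub_mul_sq_norm {b : ℝ} (hb : 0 < b) (a : E) :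
    ∫⁻ x : E, ENNReal.ofReal (Real.exp (⟪a, x⟫ - b * ‖x‖ ^ 2))
      = ENNReal.ofReal ((Real.pi / b) ^ (Module.finrank ℝ E / 2 : ℝ) *
        Real.exp (‖a‖ ^ 2 / (4 * b))) := by
  have hsquare (x : E) : ⟪a, x⟫ - b * ‖x‖ ^ 2
      = -b * ‖x - (2 * b)⁻¹ • a‖ ^ 2 + ‖a‖ ^ 2 / (4 * b) := by
    rw [norm_sub_sq_real, inner_smul_right, norm_smul, real_inner_comm,
      Real.norm_of_nonneg (by positivity)]
    field_simp
    ring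
  simp_rw [hsquare, Real.exp_add, ENNReal.ofReal_mul (Real.exp_pos _).le]
  rw [lintegral_mul_const' _ _ ENNReal.ofReal_ne_top,
    lintegral_sub_right_eq_self (fun x : E ↦ ENNReal.ofReal (Real.exp (-b * ‖x‖ ^ 2))),
    lintegral_exp_neg_mul_sq_norm hb, ← ENNReal.ofReal_mul (by positivity)]

end Gaussian

/-- A measure `μ` on an inner product space is subgaussian with variance proxy `t` if its moment
generating function is at most that of `N(0, tI)`. Total mass less than `1` is allowed, which covers
the degenerate `gaussMeasure d 0`. -/
def IsSubgaussian {E : Type*} [NormedAddCommGroup E] [InnerProductSpace ℝ E] [MeasurableSpace E]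
    (μ : Measure E) (t : ℝ) : Prop :=
  ∀ a : E, ∫⁻ x, ENNReal.ofReal (Real.exp ⟪a, x⟫) ∂μ ≤ ENNReal.ofReal (Real.exp (t * ‖a‖ ^ 2 / 2))

namespace IsSubgaussian

variable {E : Type*} [NormedAddCommGroup E] [InnerProductSpace ℝ E] [MeasurableSpace E]
  {μ : Measure E} {t : ℝ}

lemma isFiniteMeasure (h : IsSubgaussian μ t) : IsFiniteMeasure μ :=
  ⟨by simpa using (h 0).trans_lt ENNReal.ofReal_lt_top⟩

lemma integrable_exp_inner [OpensMeasurableSpace E] (h : IsSubgaussian μ t) (a : E) :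
    Integrable (fun x ↦ Real.exp ⟪a, x⟫) μ := by
  have hcont : Continuous fun x ↦ Real.exp ⟪a, x⟫ := by fun_prop
  refine ⟨hcont.measurable.aestronglyMeasurable, ?_⟩
  rw [hasFiniteIntegral_iff_ofReal (ae_of_all _ fun x ↦ (Real.exp_pos _).le)]
  exact (h a).trans_lt ENNReal.ofReal_lt_top

lemma map_sum_pi [BorelSpace E] [SecondCountableTopology E] {ι : Type*} [Fintype ι]
    {ν : ι → Measure E} {s : ι → ℝ} (h : ∀ i, IsSubgaussian (ν i) (s i)) :
    IsSubgaussian ((Measure.pi ν).map fun ξ ↦ ∑ i, ξ i) (∑ i, s i) := by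
  intro a
  have := fun i ↦ (h i).isFiniteMeasure
  calc ∫⁻ x, ENNReal.ofReal (Real.exp ⟪a, x⟫) ∂((Measure.pi ν).map fun ξ ↦ ∑ i, ξ i)
      = ∫⁻ ξ, ENNReal.ofReal (∏ i, Real.exp ⟪a, ξ i⟫) ∂(Measure.pi ν) := by
        rw [lintegral_map (by fun_prop) (by fun_prop)]
        simp only [inner_sum, Real.exp_sum]
    _ = ∏ i, ∫⁻ x, ENNReal.ofReal (Real.exp ⟪a, x⟫) ∂(ν i) :=
        lintegral_ofReal_fintype_prod_eq_prod (fun i ↦ (h i).integrable_exp_inner a)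
          fun _ _ ↦ (Real.exp_pos _).le
    _ ≤ ∏ i, ENNReal.ofReal (Real.exp (s i * ‖a‖ ^ 2 / 2)) := Finset.prod_le_prod' fun i _ ↦ h i a
    _ = ENNReal.ofReal (Real.exp ((∑ i, s i) * ‖a‖ ^ 2 / 2)) := by
        rw [← ENNReal.ofReal_prod_of_nonneg fun i _ ↦ (Real.exp_pos _).le, ← Real.exp_sum,
          Finset.sum_mul, Finset.sum_div]

lemma lintegral_exp_inner_sub_mul_sq_norm_le (h : IsSubgaussian μ t) (c b : ℝ) (y : E) :
    ∫⁻ x, ENNReal.ofReal (Real.exp (⟪c • x, y⟫ - b * ‖y‖ ^ 2)) ∂μ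
      ≤ ENNReal.ofReal (Real.exp (-(b - c ^ 2 * t / 2) * ‖y‖ ^ 2)) := by
  have hsplit (x : E) : ⟪c • x, y⟫ - b * ‖y‖ ^ 2 = -(b * ‖y‖ ^ 2) + ⟪c • y, x⟫ := by
    rw [real_inner_smul_left, real_inner_smul_left, real_inner_comm]
    ring
  simp_rw [hsplit, Real.exp_add, ENNReal.ofReal_mul (Real.exp_pos _).le]
  rw [lintegral_const_mul' _ _ ENNReal.ofReal_ne_top]
  grw [h (c • y)]
  rw [← ENNReal.ofReal_mul (Real.exp_pos _).le, ← Real.exp_add, norm_smul, mul_pow,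
    Real.norm_eq_abs, sq_abs]
  apply le_of_eq
  congr 2
  ring

lemma lintegral_exp_sq_norm_le [FiniteDimensional ℝ E] [BorelSpace E] (h : IsSubgaussian μ t)
    {L : ℝ} (hL : 0 ≤ L) (hLt : L * t < 1) :
    ∫⁻ x, ENNReal.ofReal (Real.exp (L * ‖x‖ ^ 2 / 2)) ∂μ
      ≤ ENNReal.ofReal ((1 - L * t) ^ (-(Module.finrank ℝ E : ℝ) / 2)) := by
  have := h.isFiniteMeasure
  set n : ℝ := (Module.finrank ℝ E : ℝ)
  have hr : 0 < 1 - L * t := sub_pos.2 hLt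
  let C : ENNReal := ENNReal.ofReal ((2 * Real.pi) ^ (n / 2))
  have hC : C ≠ 0 := (ENNReal.ofReal_pos.2 (by positivity)).ne'
  refine (ENNReal.mul_le_mul_iff_right hC ENNReal.ofReal_ne_top).1 ?_
  calc C * ∫⁻ x, ENNReal.ofReal (Real.exp (L * ‖x‖ ^ 2 / 2)) ∂μ
      = ∫⁻ x, (∫⁻ y : E, ENNReal.ofReal (Real.exp (⟪√L • x, y⟫ - 1 / 2 * ‖y‖ ^ 2))) ∂μ := by
        rw [← lintegral_const_mul' _ _ ENNReal.ofReal_ne_top]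
        refine lintegral_congr fun x ↦ ?_
        rw [lintegral_exp_inner_sub_mul_sq_norm one_half_pos, ← ENNReal.ofReal_mul (by positivity),
          norm_smul, mul_pow, Real.norm_of_nonneg L.sqrt_nonneg, Real.sq_sqrt hL]
        congr 3 <;> ring
    _ = ∫⁻ y : E, ∫⁻ x, ENNReal.ofReal (Real.exp (⟪√L • x, y⟫ - 1 / 2 * ‖y‖ ^ 2)) ∂μ :=
        lintegral_lintegral_swap (by unfold Function.uncurry; fun_prop)
    _ ≤ ∫⁻ y : E, ENNReal.ofReal (Real.exp (-(1 / 2 - √L ^ 2 * t / 2) * ‖y‖ ^ 2)) :=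
        lintegral_mono (h.lintegral_exp_inner_sub_mul_sq_norm_le √L (1 / 2))
    _ = ENNReal.ofReal ((2 * Real.pi * (1 - L * t)⁻¹) ^ (n / 2)) := by
        rw [Real.sq_sqrt hL, ← sub_div, lintegral_exp_neg_mul_sq_norm (half_pos hr)]
        congr 2
        field_simp
    _ = C * ENNReal.ofReal ((1 - L * t) ^ (-n / 2)) := by
        rw [Real.mul_rpow (by positivity) (by positivity), ENNReal.ofReal_mul (by positivity),
          Real.inv_rpow hr.le, ← Real.rpow_neg hr.le, neg_div]

end IsSubgaussian

section GaussMeasure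

variable {d : ℕ} {t : ℝ}

lemma gaussMeasure_zero_le_dirac : gaussMeasure d 0 ≤ Measure.dirac 0 := by
  rcases d.eq_zero_or_pos with rfl | hd
  · simp [gaussMeasure, gaussPdf, volume_euclideanSpace_eq_dirac]
  · have hpow : (0 : ℝ) ^ (-(d : ℝ) / 2) = 0 := Real.zero_rpow (by simp [hd.ne'])
    simp [gaussMeasure, gaussPdf, hpow, Measure.zero_le]

lemma isSubgaussian_gaussMeasure_of_pos (ht : 0 < t) : IsSubgaussian (gaussMeasure d t) t := by
  intro a
  have hdensity (x : EuclideanSpace ℝ (Fin d)) :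
      ENNReal.ofReal (gaussPdf d t x) * ENNReal.ofReal (Real.exp ⟪a, x⟫)
        = ENNReal.ofReal ((2 * Real.pi * t) ^ (-(d : ℝ) / 2)) *
          ENNReal.ofReal (Real.exp (⟪a, x⟫ - (2 * t)⁻¹ * ‖x‖ ^ 2)) := by
    rw [gaussPdf, ← ENNReal.ofReal_mul (by positivity), ← ENNReal.ofReal_mul (by positivity),
      mul_assoc, ← Real.exp_add]
    congr 3
    ring
  have hnormalization :
      (2 * Real.pi * t) ^ (-(d : ℝ) / 2) * (Real.pi / (2 * t)⁻¹) ^ ((d : ℝ) / 2) = 1 := by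
    rw [show Real.pi / (2 * t)⁻¹ = 2 * Real.pi * t by field_simp, ← Real.rpow_add (by positivity),
      neg_div, neg_add_cancel, Real.rpow_zero]
  have hexponent : ‖a‖ ^ 2 / (4 * (2 * t)⁻¹) = t * ‖a‖ ^ 2 / 2 := by
    field_simp
    norm_num
  rw [gaussMeasure, lintegral_withDensity_eq_lintegral_mul _ (by unfold gaussPdf; fun_prop)
    (by fun_prop)]
  simp only [Pi.mul_apply, hdensity]
  rw [lintegral_const_mul' _ _ ENNReal.ofReal_ne_top,
    lintegral_exp_inner_sub_mul_sq_norm (by positivity), ← ENNReal.ofReal_mul (by positivity),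
    finrank_euclideanSpace_fin, ← mul_assoc, hnormalization, one_mul, hexponent]

lemma isSubgaussian_gaussMeasure (ht : 0 ≤ t) : IsSubgaussian (gaussMeasure d t) t := by
  rcases ht.eq_or_lt with rfl | ht
  · intro a
    grw [gaussMeasure_zero_le_dirac]
    simp
  · exact isSubgaussian_gaussMeasure_of_pos ht

end GaussMeasure

theorem exp_moment_heat_bound_general {E : Type*} [NormedAddCommGroup E] [InnerProductSpace ℝ E]
    [FiniteDimensional ℝ E] [MeasurableSpace E] [BorelSpace E] {ι : Type*} [Fintype ι] {L : ℝ}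
    (hL : 0 ≤ L) {V : E → ℝ} (hV : Differentiable ℝ V) (hconv : ConvexOn ℝ Set.univ V)
    (hsmooth : ∀ x y, ‖gradient V x - gradient V y‖ ≤ L * ‖x - y‖) {ν : ι → Measure E} {s : ι → ℝ}
    (hν : ∀ i, IsSubgaussian (ν i) (s i)) (hs : L * ∑ i, s i < 1) :
    ∫⁻ x, ∫⁻ ξ, ENNReal.ofReal (Real.exp (-(∑ i, V (x + ξ i)) + Fintype.card ι * V x))
        ∂(Measure.pi ν)
        ∂(volume.withDensity fun x ↦ ENNReal.ofReal (Real.exp (-(V x)) / ∫ y, Real.exp (-(V y))))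
      ≤ ENNReal.ofReal ((1 - L * ∑ i, s i) ^ (-(Module.finrank ℝ E : ℝ) / 2)) := by
  have := fun i ↦ (hν i).isFiniteMeasure
  grw [lintegral_lintegral_exp_sum_le_mul (integral_nonneg fun x ↦ (Real.exp_pos _).le) hV hconv
      hsmooth volume (Measure.pi ν),
    lintegral_ofReal_div_integral_le_one fun x ↦ (Real.exp_pos _).le, one_mul,
    ← (IsSubgaussian.map_sum_pi hν).lintegral_exp_sq_norm_le hL hs,
    lintegral_map (by fun_prop) (by fun_prop)]

/-- For ρ ∝ exp(−V) with V convex and L-smooth, q ≥ 2 an integer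
and ξ₁,…,ξ_q i.i.d. N(0,tI) with Lqt < 1,
∫ E[exp(−∑ᵢ V(x+ξᵢ) + qV(x))] ρ(dx) ≤ (1 − Lqt)^{−d/2}. -/
theorem exp_moment_heat_bound {d : ℕ} (L t : ℝ) (hL : 0 < L) (ht : 0 ≤ t)
    (V : EuclideanSpace ℝ (Fin d) → ℝ) (hV : ContDiff ℝ 2 V)
    (hconv : ConvexOn ℝ Set.univ V)
    (hsmooth : ∀ x y, ‖gradient V x - gradient V y‖ ≤ L * ‖x - y‖)
    (Z : ℝ) (hZ : Z = ∫ x, Real.exp (-(V x)))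
    (ρ : Measure (EuclideanSpace ℝ (Fin d)))
    (hρ : ρ = volume.withDensity fun x => ENNReal.ofReal (Real.exp (-(V x)) / Z))
    (q : ℕ) (hq : 2 ≤ q) (hqt : L * q * t < 1) :
    ∫ x, (∫ ξ : Fin q → EuclideanSpace ℝ (Fin d),
        Real.exp (-(∑ i, V (x + ξ i)) + q * V x)
        ∂(Measure.pi fun _ : Fin q => gaussMeasure d t)) ∂ρ
      ≤ (1 - L*q*t) ^ (-(d:ℝ)/2) := by
  subst hZ hρ
  refine integral_integral_le_of_lintegral_lintegral_le (fun _ _ ↦ (Real.exp_pos _).le)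
    (Real.rpow_nonneg (sub_nonneg.2 hqt.le) _) ?_
  simpa [mul_assoc] using exp_moment_heat_bound_general hL.le (hV.differentiable two_ne_zero) hconv
    hsmooth (fun _ : Fin q ↦ isSubgaussian_gaussMeasure ht) (by simpa [mul_assoc] using hqt)
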